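/- There is an absolute constant c > 0 with the following property. Let 𝔇 ≥ 1 be an integer, p an odd prime not dividing 𝔇, and x, y, n integers. Let V_p ⊆ (ℤ/pℤ)⁴ be the set of quadruples (c₁, c₂, d₁, d₂) whose associated pair (c, d) = (c₁ + c₂√−𝔇, d₁ + d₂√−𝔇) in R = ℤ[√−𝔇]/(p) is unimodular, and let N be the number of quadruples in V_p satisfying A·x² + B·y² + C·x + D·y + E ≡ n (mod p), with A = c₁² + 𝔇c₂², B = 𝔇A, C = 2(c₁d₁ + 𝔇c₂d₂), D = 2𝔇(c₁d₂ − c₂d₁), E = A + d₁² + 𝔇d₂². Then |N/#V_p − 1/p| ≤ c/p². -/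

import Mathlib

/-!
The form `A x² + B y² + C x + D y + E` equals `N(c) + N(d + c z)`, where `z = x + y√−𝔇` and
`N(u + v√−𝔇) = u² + 𝔇v²`. For fixed `c` the map `d ↦ d + c z` is a translation, so the congruence
has `M = ∑_c r(n − N(c))` solutions in `(ℤ/pℤ)⁴`, where `r(k)` is the number of zeros of `N − k` on `(ℤ/pℤ)²`
(`card_quadCongr`). As `N` is multiplicative and represents every residue, `r` is constant on
nonzero residues (`normCount_eq_one`); together with `∑ k, r(k) = p²` and `r(k) ≤ 2p` this gives
`|M − p³| ≤ 6p²` (`abs_sum_sub_le`). Finally, a pair with `N(c) ≠ 0` or `N(d) ≠ 0` is unimodular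
(the conjugate divided by the norm is an inverse), so at most `r(0)² ≤ 4p²` quadruples are not
unimodular. Hence `p³ + O(p²)` unimodular quadruples satisfy the congruence, while
`#V_p = p⁴ + O(p²)`.
-/

/-- The ring `ℤ[√−𝔇]`, modelled as `ℤ[X]/(X² + 𝔇)`. -/
abbrev ZsqrtNeg (𝔇 : ℕ) : Type := AdjoinRoot ((Polynomial.X : Polynomial ℤ) ^ 2 + Polynomial.C (𝔇 : ℤ))

/-- The quotient ring `R = ℤ[√−𝔇]/(p)`. -/
abbrev Rmod (𝔇 p : ℕ) : Type := ZsqrtNeg 𝔇 ⧸ Ideal.span {(p : ZsqrtNeg 𝔇)}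

/-- The image of `u + v√−𝔇` in `R = ℤ[√−𝔇]/(p)`. -/
noncomputable def toRmod (𝔇 p : ℕ) (u v : ℤ) : Rmod 𝔇 p :=
  Ideal.Quotient.mk (Ideal.span {(p : ZsqrtNeg 𝔇)})
    ((u : ZsqrtNeg 𝔇) + (v : ZsqrtNeg 𝔇) * AdjoinRoot.root _)

/-- A quadruple `(c₁, c₂, d₁, d₂) ∈ (ℤ/pℤ)⁴` is unimodular if the associated pair
`(c₁ + c₂√−𝔇, d₁ + d₂√−𝔇)` in `R = ℤ[√−𝔇]/(p)` admits `a, b ∈ R` with `a·d − b·c = 1`. -/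
def IsUnimodular (𝔇 p : ℕ) (v : ZMod p × ZMod p × ZMod p × ZMod p) : Prop :=
  ∃ a b : Rmod 𝔇 p,
    a * toRmod 𝔇 p (v.2.2.1.val : ℤ) (v.2.2.2.val : ℤ)
      - b * toRmod 𝔇 p (v.1.val : ℤ) (v.2.1.val : ℤ) = 1

/-- The congruence `A x² + B y² + C x + D y + E = n` in `ℤ/pℤ` for the quadruple
`v = (c₁, c₂, d₁, d₂)`. -/
def QuadCongr (𝔇 p : ℕ) (x y n : ℤ) (v : ZMod p × ZMod p × ZMod p × ZMod p) : Prop :=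
  (v.1 ^ 2 + (𝔇 : ZMod p) * v.2.1 ^ 2) * (x : ZMod p) ^ 2
    + ((𝔇 : ZMod p) * (v.1 ^ 2 + (𝔇 : ZMod p) * v.2.1 ^ 2)) * (y : ZMod p) ^ 2
    + (2 * (v.1 * v.2.2.1 + (𝔇 : ZMod p) * v.2.1 * v.2.2.2)) * (x : ZMod p)
    + (2 * (𝔇 : ZMod p) * (v.1 * v.2.2.2 - v.2.1 * v.2.2.1)) * (y : ZMod p)
    + ((v.1 ^ 2 + (𝔇 : ZMod p) * v.2.1 ^ 2) + v.2.2.1 ^ 2 + (𝔇 : ZMod p) * v.2.2.2 ^ 2)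
    = (n : ZMod p)

open Finset in
/-- The number of pairs `(u, v)` over `F` with `u² + D v² = k`. -/
def normCount {F : Type*} [Field F] [Fintype F] [DecidableEq F] (D k : F) : ℕ :=
  #{a : F × F | a.1 ^ 2 + D * a.2 ^ 2 = k}

lemma exists_sq_add_mul_sq_eq {F : Type*} [Field F] [Fintype F] (hF : ringChar F ≠ 2)
    {D : F} (hD : D ≠ 0) (k : F) :
    ∃ u v : F, u ^ 2 + D * v ^ 2 = k := by
  open Polynomial in
  obtain ⟨a, b, h⟩ := FiniteField.exists_root_sum_quadratic (R := F)
    (f := X ^ 2 - C k) (g := C D * X ^ 2) (by compute_degree!) (by compute_degree!)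
    (FiniteField.odd_card_of_char_ne_two hF)
  simp only [Polynomial.eval_sub, Polynomial.eval_pow, Polynomial.eval_X, Polynomial.eval_C,
    Polynomial.eval_mul] at h
  exact ⟨a, b, by linear_combination h⟩

section Count

open Finset

variable {F : Type*} [Field F] [Fintype F] [DecidableEq F]

lemma normCount_le (D k : F) : normCount D k ≤ 2 * Fintype.card F := by
  have h : normCount D k = ∑ v : F, #{u : F | u ^ 2 + D * v ^ 2 = k} := by
    simp only [normCount, card_filter]
    rw [Fintype.sum_prod_type_right]
  rw [h, mul_comm, ← smul_eq_mul, ← card_univ]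
  refine sum_le_card_nsmul _ _ _ fun v _ => ?_
  by_cases h0 : ∃ u : F, u ^ 2 + D * v ^ 2 = k
  · obtain ⟨u, hu⟩ := h0
    refine (card_le_card (t := {u, -u}) fun w hw => ?_).trans card_le_two
    simp only [mem_filter, mem_univ, true_and] at hw
    simp only [mem_insert, mem_singleton]
    exact sq_eq_sq_iff_eq_or_eq_neg.mp (by linear_combination hw - hu)
  · push Not at h0
    simp [h0]

lemma sum_normCount (D : F) : ∑ k, normCount D k = Fintype.card F ^ 2 := by
  have h := card_eq_sum_card_fiberwise (s := (univ : Finset (F × F))) (t := univ)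
    (f := fun a => a.1 ^ 2 + D * a.2 ^ 2) (by simp)
  rw [card_univ, Fintype.card_prod, ← sq] at h
  exact h.symm

/-- Multiplication by an element `u + v√−D` of norm `k ≠ 0` injects the pairs of norm `m` into
those of norm `k * m`. -/
lemma normCount_le_mul {D k : F} (hk : k ≠ 0) (m : F) {u v : F} (huv : u ^ 2 + D * v ^ 2 = k) :
    normCount D m ≤ normCount D (k * m) := by
  refine card_le_card_of_injOn
    (fun a : F × F => (u * a.1 - D * v * a.2, u * a.2 + v * a.1)) ?_ ?_
  · intro a ha
    simp only [coe_filter, mem_univ, true_and, Set.mem_ofPred_eq] at ha ⊢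
    rw [← huv, ← ha]
    ring
  · rintro a - b - hab
    simp only [Prod.mk.injEq] at hab
    obtain ⟨h1, h2⟩ := hab
    -- multiply by the conjugate `u - v√−D`
    refine Prod.ext (mul_left_cancel₀ hk ?_) (mul_left_cancel₀ hk ?_) <;> rw [← huv]
    · linear_combination u * h1 + D * v * h2
    · linear_combination u * h2 - v * h1

/-- Multiplication by elements of norm `k` and of norm `k⁻¹` gives the two inequalities. -/
lemma normCount_eq_one (hF : ringChar F ≠ 2) {D : F} (hD : D ≠ 0) {k : F} (hk : k ≠ 0) :
    normCount D k = normCount D 1 := by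
  obtain ⟨u, v, h⟩ := exists_sq_add_mul_sq_eq hF hD k
  obtain ⟨u', v', h'⟩ := exists_sq_add_mul_sq_eq hF hD k⁻¹
  apply le_antisymm
  · simpa [hk] using normCount_le_mul (inv_ne_zero hk) k h'
  · simpa using normCount_le_mul hk 1 h

/-- The number of pairs `(c, e)` of elements of `F²` with `N(c) + N(e) = n`, where
`N(u, v) = u² + D v²`, is `q³ + O(q²)` for `q = #F`. -/
lemma abs_sum_sub_le (hF : ringChar F ≠ 2) {D : F} (hD : D ≠ 0) (n : F)
    (hq : 3 ≤ Fintype.card F) :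
    |((∑ a : F × F, normCount D (n - (a.1 ^ 2 + D * a.2 ^ 2)) : ℕ) : ℝ)
      - (Fintype.card F : ℝ) ^ 3| ≤ 6 * (Fintype.card F : ℝ) ^ 2 := by
  set q : ℝ := (Fintype.card F : ℝ) with hqdef
  have hq' : (3 : ℝ) ≤ q := by rw [hqdef]; exact_mod_cast hq
  set t : ℝ := (normCount D 1 : ℝ) with ht
  set z : ℝ := (normCount D 0 : ℝ) with hz
  set s : ℝ := (normCount D n : ℝ) with hs
  have ht2 : t ≤ 2 * q := by rw [ht, hqdef]; exact_mod_cast normCount_le D 1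
  have hz2 : z ≤ 2 * q := by rw [hz, hqdef]; exact_mod_cast normCount_le D 0
  have hs2 : s ≤ 2 * q := by rw [hs, hqdef]; exact_mod_cast normCount_le D n
  have ht0 : 0 ≤ t := Nat.cast_nonneg _
  have hz0 : 0 ≤ z := Nat.cast_nonneg _
  have hs0 : 0 ≤ s := Nat.cast_nonneg _
  have key : ∀ k : F, (normCount D k : ℝ) = t + if k = 0 then z - t else 0 := by
    intro k
    split_ifs with h
    · rw [h]; ring
    · rw [normCount_eq_one hF hD h, add_zero]
  have htot : q * t + (z - t) = q ^ 2 := by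
    have h := congrArg (Nat.cast (R := ℝ)) (sum_normCount D)
    push_cast at h
    simp only [key] at h
    rw [sum_add_distrib] at h
    simpa using h
  have hM : ((∑ a : F × F, normCount D (n - (a.1 ^ 2 + D * a.2 ^ 2)) : ℕ) : ℝ)
      = q ^ 2 * t + s * (z - t) := by
    push_cast
    simp only [key]
    rw [sum_add_distrib, ← sum_filter, sum_const, sum_const, card_univ, Fintype.card_prod]
    have : #{a : F × F | n - (a.1 ^ 2 + D * a.2 ^ 2) = 0} = normCount D n := by
      unfold normCount
      congr 1
      ext a
      simp only [mem_filter, mem_univ, true_and, sub_eq_zero]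
      exact eq_comm
    rw [this, nsmul_eq_mul, nsmul_eq_mul]
    push_cast
    ring
  -- `(q - 1) (t - q) = q - z`, hence `|t - q| ≤ q / (q - 1) ≤ 3 / 2 < 2`
  have h1 : (q - 1) * (t - q) = q - z := by linear_combination htot
  have h2 : |t - q| ≤ 2 := by
    rw [abs_le]; constructor <;> nlinarith
  have h3 : |z - t| ≤ 2 * q := by rw [abs_le]; constructor <;> linarith
  rw [hM, show q ^ 2 * t + s * (z - t) - q ^ 3 = q ^ 2 * (t - q) + s * (z - t) by ring]
  calc _ ≤ |q ^ 2 * (t - q)| + |s * (z - t)| := abs_add_le _ _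
    _ = q ^ 2 * |t - q| + s * |z - t| := by
      rw [abs_mul, abs_mul, abs_of_nonneg hs0, abs_of_nonneg (sq_nonneg q)]
    _ ≤ q ^ 2 * 2 + 2 * q * (2 * q) := by gcongr
    _ = _ := by ring

end Count

lemma toRmod_mul_conj (𝔇 p : ℕ) (u v : ℤ) :
    toRmod 𝔇 p u v * toRmod 𝔇 p u (-v) = ((u ^ 2 + 𝔇 * v ^ 2 : ℤ) : Rmod 𝔇 p) := by
  have hr : (AdjoinRoot.root ((Polynomial.X : Polynomial ℤ) ^ 2 + Polynomial.C (𝔇 : ℤ))) ^ 2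
      + (𝔇 : ZsqrtNeg 𝔇) = 0 := by
    have h := AdjoinRoot.eval₂_root ((Polynomial.X : Polynomial ℤ) ^ 2 + Polynomial.C (𝔇 : ℤ))
    simpa using h
  unfold toRmod
  rw [← map_mul, ← map_intCast (Ideal.Quotient.mk (Ideal.span {(p : ZsqrtNeg 𝔇)}))]
  congr 1
  push_cast
  linear_combination (-(v : ZsqrtNeg 𝔇) ^ 2) * hr

/-- An element of nonzero norm modulo `p` is a unit of `R`. -/
lemma exists_mul_toRmod_eq_one {𝔇 p : ℕ} [Fact p.Prime] (u v : ZMod p)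
    (h : u ^ 2 + 𝔇 * v ^ 2 ≠ 0) :
    ∃ a : Rmod 𝔇 p, a * toRmod 𝔇 p (u.val : ℤ) (v.val : ℤ) = 1 := by
  set N : ℤ := (u.val : ℤ) ^ 2 + 𝔇 * (v.val : ℤ) ^ 2 with hN
  have hN' : ((N : ℤ) : ZMod p) = u ^ 2 + 𝔇 * v ^ 2 := by
    rw [hN]; push_cast; simp
  set m : ℤ := ((((N : ℤ) : ZMod p)⁻¹).val : ℤ) with hm
  have hmN : ((m * N - 1 : ℤ) : ZMod p) = 0 := by
    rw [hm]
    push_cast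
    rw [ZMod.natCast_zmod_val, inv_mul_cancel₀ (by rw [hN']; exact h), sub_self]
  obtain ⟨l, hl⟩ := (ZMod.intCast_zmod_eq_zero_iff_dvd _ p).mp hmN
  have hp : (p : Rmod 𝔇 p) = 0 := by
    rw [← map_natCast (Ideal.Quotient.mk (Ideal.span {(p : ZsqrtNeg 𝔇)}))]
    exact Ideal.Quotient.eq_zero_iff_mem.mpr (Ideal.mem_span_singleton_self _)
  refine ⟨(m : Rmod 𝔇 p) * toRmod 𝔇 p u.val (-(v.val : ℤ)), ?_⟩
  have hl' := congrArg (Int.cast (R := Rmod 𝔇 p)) hl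
  push_cast at hl'
  rw [hp, zero_mul] at hl'
  have hc := toRmod_mul_conj 𝔇 p u.val v.val
  rw [← hN] at hc
  linear_combination (m : Rmod 𝔇 p) * hc + hl'

lemma norm_eq_zero_of_not_isUnimodular {𝔇 p : ℕ} [Fact p.Prime]
    {v : ZMod p × ZMod p × ZMod p × ZMod p} (h : ¬ IsUnimodular 𝔇 p v) :
    v.1 ^ 2 + 𝔇 * v.2.1 ^ 2 = 0 ∧ v.2.2.1 ^ 2 + 𝔇 * v.2.2.2 ^ 2 = 0 := by
  constructor <;> by_contra hne <;> obtain ⟨a, ha⟩ := exists_mul_toRmod_eq_one _ _ hne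
  · exact h ⟨0, -a, by linear_combination ha⟩
  · exact h ⟨a, 0, by linear_combination ha⟩

lemma card_not_isUnimodular_le (𝔇 p : ℕ) [Fact p.Prime] :
    Nat.card {v : ZMod p × ZMod p × ZMod p × ZMod p // ¬ IsUnimodular 𝔇 p v} ≤ 4 * p ^ 2 := by
  let Z := {a : ZMod p × ZMod p // a.1 ^ 2 + (𝔇 : ZMod p) * a.2 ^ 2 = 0}
  have hZ : Nat.card Z ≤ 2 * p := by
    have h := normCount_le (𝔇 : ZMod p) 0
    rw [ZMod.card] at h
    rwa [Nat.card_eq_fintype_card, Fintype.card_subtype]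
  let f : {v : ZMod p × ZMod p × ZMod p × ZMod p // ¬ IsUnimodular 𝔇 p v} → Z × Z := fun v =>
    (⟨(v.1.1, v.1.2.1), (norm_eq_zero_of_not_isUnimodular v.2).1⟩,
      ⟨v.1.2.2, (norm_eq_zero_of_not_isUnimodular v.2).2⟩)
  have hf : Function.Injective f := by
    rintro ⟨⟨a, b, c⟩, h⟩ ⟨⟨a', b', c'⟩, h'⟩ heq
    have h1 := congrArg (fun w : Z × Z => w.1.1) heq
    have h2 := congrArg (fun w : Z × Z => w.2.1) heq
    simp only [f, Prod.mk.injEq] at h1 h2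
    simp [h1, h2]
  calc _ ≤ Nat.card (Z × Z) := Nat.card_le_card_of_injective f hf
    _ = Nat.card Z * Nat.card Z := Nat.card_prod _ _
    _ ≤ (2 * p) * (2 * p) := Nat.mul_le_mul hZ hZ
    _ = _ := by ring

open Finset in
lemma card_quadCongr (𝔇 p : ℕ) [Fact p.Prime] (x y n : ℤ) :
    Nat.card {v : ZMod p × ZMod p × ZMod p × ZMod p // QuadCongr 𝔇 p x y n v}
      = ∑ a : ZMod p × ZMod p,
          normCount (𝔇 : ZMod p) ((n : ZMod p) - (a.1 ^ 2 + (𝔇 : ZMod p) * a.2 ^ 2)) := by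
  classical
  rw [Nat.card_eq_fintype_card, Fintype.card_subtype, card_filter, Fintype.sum_prod_type,
    Fintype.sum_prod_type]
  refine sum_congr rfl fun c₁ _ => ?_
  rw [Fintype.sum_prod_type]
  refine sum_congr rfl fun c₂ _ => ?_
  rw [normCount, card_filter]
  -- translate `d` by `c z` with `z = x + y√−𝔇`
  refine Fintype.sum_equiv
    (Equiv.addRight ((c₁ * x - 𝔇 * c₂ * y, c₂ * x + c₁ * y) : ZMod p × ZMod p)) _ _ fun d => ?_
  refine if_congr ?_ rfl rfl
  simp only [QuadCongr, Equiv.coe_addRight, Prod.fst_add, Prod.snd_add]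
  constructor <;> intro h <;> linear_combination h

/-- Counts `N = p³ + O(p²)` and `V = p⁴ + O(p²)` have ratio `1/p + O(1/p²)`. -/
lemma ratio_estimate {p N V : ℝ} (hp : 3 ≤ p) (hN : |N - p ^ 3| ≤ 10 * p ^ 2)
    (hV : |V - p ^ 4| ≤ 4 * p ^ 2) : |N / V - 1 / p| ≤ 24 / p ^ 2 := by
  rw [abs_le] at hN hV
  have hp0 : 0 < p := by linarith
  have hp2 : 9 ≤ p ^ 2 := by nlinarith
  have hV2 : p ^ 4 / 2 ≤ V := by nlinarith
  have hV0 : 0 < V := lt_of_lt_of_le (by positivity) hV2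
  have hnum : |p * N - V| ≤ 12 * p ^ 3 := by
    have h3 : 3 * p ^ 2 ≤ p ^ 3 := by nlinarith
    have h4 := mul_le_mul_of_nonneg_left hN.1 hp0.le
    have h5 := mul_le_mul_of_nonneg_left hN.2 hp0.le
    rw [abs_le]
    constructor <;> nlinarith
  rw [show N / V - 1 / p = (p * N - V) / (p * V) by field_simp, abs_div,
    abs_of_pos (mul_pos hp0 hV0), div_le_div_iff₀ (mul_pos hp0 hV0) (by positivity)]
  calc |p * N - V| * p ^ 2 ≤ 12 * p ^ 3 * p ^ 2 := by gcongr
    _ = 24 * (p * (p ^ 4 / 2)) := by ring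
    _ ≤ 24 * (p * V) := by gcongr

/-- There is an absolute constant `c > 0` such that for every `𝔇 ≥ 1`, every odd prime
`p ∤ 𝔇` and all integers `x, y, n`: letting `V_p` be the set of unimodular quadruples in
`(ℤ/pℤ)⁴` and `N` the number of those also satisfying the congruence
`A x² + B y² + C x + D y + E ≡ n (mod p)`, one has `|N/#V_p − 1/p| ≤ c/p²`. -/
theorem density_estimate : ∃ c : ℝ, 0 < c ∧
    ∀ (𝔇 : ℕ), 1 ≤ 𝔇 → ∀ (p : ℕ), p.Prime → Odd p → ¬ p ∣ 𝔇 → ∀ (x y n : ℤ),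
      |(Nat.card {v : ZMod p × ZMod p × ZMod p × ZMod p //
            IsUnimodular 𝔇 p v ∧ QuadCongr 𝔇 p x y n v} : ℝ)
          / (Nat.card {v : ZMod p × ZMod p × ZMod p × ZMod p // IsUnimodular 𝔇 p v} : ℝ)
        - 1 / (p : ℝ)| ≤ c / (p : ℝ) ^ 2 := by
  classical
  refine ⟨24, by norm_num, fun 𝔇 _ p hp hodd hpD x y n => ?_⟩
  have : Fact p.Prime := ⟨hp⟩
  have hp2 : p ≠ 2 := by rintro rfl; exact absurd hodd (by decide)
  have hp3 : 3 ≤ p := by have := hp.two_le; omega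
  have hF : ringChar (ZMod p) ≠ 2 := by rwa [ZMod.ringChar_zmod_n]
  have hD : (𝔇 : ZMod p) ≠ 0 := by rwa [Ne, ZMod.natCast_eq_zero_iff]
  have hM := abs_sum_sub_le hF hD (n : ZMod p) (by rwa [ZMod.card])
  rw [← card_quadCongr, ZMod.card] at hM
  have hbad := card_not_isUnimodular_le 𝔇 p
  have hVsum : Nat.card {v // IsUnimodular 𝔇 p v} + Nat.card {v // ¬ IsUnimodular 𝔇 p v}
      = p ^ 4 := by
    rw [← Nat.card_sum, Nat.card_congr (Equiv.sumCompl _)]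
    simp only [Nat.card_prod, Nat.card_zmod]
    ring
  have hle : Nat.card {v // IsUnimodular 𝔇 p v ∧ QuadCongr 𝔇 p x y n v}
      ≤ Nat.card {v // QuadCongr 𝔇 p x y n v} :=
    Nat.card_mono (Set.toFinite {v | QuadCongr 𝔇 p x y n v}) fun _ h => h.2
  have hge : Nat.card {v // QuadCongr 𝔇 p x y n v}
      ≤ Nat.card {v // IsUnimodular 𝔇 p v ∧ QuadCongr 𝔇 p x y n v}
        + Nat.card {v // ¬ IsUnimodular 𝔇 p v} := by
    simp only [Nat.card_eq_fintype_card, Fintype.card_subtype]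
    refine (Finset.card_le_card fun v hv => ?_).trans (Finset.card_union_le _ _)
    simp only [Finset.mem_filter, Finset.mem_univ, true_and, Finset.mem_union] at hv ⊢
    tauto
  rify at hbad hVsum hle hge
  rw [abs_le] at hM
  refine ratio_estimate (by exact_mod_cast hp3) ?_ ?_ <;> rw [abs_le] <;> constructor <;>
    linarith
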